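/- Let X be a finite set, let r ≥ 1 and n ≥ 1 be integers, and for each i ∈ Fin r let P i be a family of n subsets of X ('blocks') that are pairwise disjoint and whose union is X (i.e., each P i is a partition of X into exactly n blocks, a parallel class). Suppose that for every choice function f with f i ∈ P i for all i ∈ Fin r, the intersection ⋂_{i ∈ Fin r} f i has exactly one element (μ_r = 1). Then |X| = n^r. -/

import Mathlib

/-- Lemma 3: a maximal cross resolvable design with `μ_r = 1` satisfies
`v = b_r ^ r`.  If `X` carries `r ≥ 1` parallel classes, each consisting of
`n ≥ 1` pairwise disjoint blocks covering `X`, and any choice of one block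
from each parallel class intersects in exactly one point, then `|X| = n^r`. -/
theorem maximal_crd_point_count (X : Type*) [Fintype X] [DecidableEq X]
    (r n : ℕ) (hr : 1 ≤ r) (hn : 1 ≤ n)
    (P : Fin r → Finset (Finset X))
    (hcard : ∀ i, (P i).card = n)
    (hdisj : ∀ i, ∀ B₁ ∈ P i, ∀ B₂ ∈ P i, B₁ ≠ B₂ → Disjoint B₁ B₂)
    (hcover : ∀ i, ∀ x : X, ∃ B ∈ P i, x ∈ B)
    (hmu : ∀ f : Fin r → Finset X, (∀ i, f i ∈ P i) →
      ∃! x : X, ∀ i, x ∈ f i) :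
    Fintype.card X = n ^ r := by
  choose block block_mem mem_block using hcover
  have hpi : (Fintype.piFinset P).card = n ^ r := by
    simp [Fintype.card_piFinset, hcard]
  rw [← hpi, ← Finset.card_univ]
  refine Finset.card_bij (fun x _ i => block i x) ?_ ?_ ?_
  · intro x _
    exact Fintype.mem_piFinset.2 fun i => block_mem i x
  · intro x _ y _ hxy
    refine (hmu (fun i => block i x) fun i => block_mem i x).unique
      (fun i => mem_block i x) fun i => ?_
    have hi : block i x = block i y := congrFun hxy i
    exact hi ▸ mem_block i y
  · intro f hf
    have hfP := Fintype.mem_piFinset.1 hf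
    obtain ⟨x, hx, -⟩ := hmu f hfP
    refine ⟨x, Finset.mem_univ x, funext fun i => ?_⟩
    by_contra hne
    exact Finset.disjoint_left.1 (hdisj i _ (block_mem i x) _ (hfP i) hne)
      (mem_block i x) (hx i)
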